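/- Let E, F be finite-dimensional real inner product spaces, P_1, …, P_d : E → F linear maps with principal symbol P(ξ) = ∑_{i=1}^d ξ_i P_i, and fix a nonzero e ∈ E. Let σ be a positive Radon measure on the open unit ball B_1 ⊆ ℝ^d such that the E-valued measure eσ satisfies ∑_{i=1}^d P_i ∂_i (eσ) = 0 in the sense of distributions on B_1, i.e., ∑_{i=1}^d ∫_{B_1} ⟨P_i(e), ∂_i φ⟩ dσ = 0 for all smooth compactly supported φ : B_1 → F. Then σ is V-invariant on B_1 with V := {ξ ∈ ℝ^d : P(ξ)e = 0}^⊥, i.e., ∫_{B_1} ⟨∇φ(y), v⟩ dσ(y) = 0 for every v ∈ {ξ : P(ξ)e = 0}^⊥ and every smooth compactly supported φ : B_1 → ℝ. -/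

import Mathlib

/-!
Let `T ξ = ∑ᵢ ξᵢ Pᵢ e`, so that `kerSymb P e = ker T` and, in finite dimension,
`(ker T)ᗮ = range T†`. A vector `v` of this space is thus `T† f` for some `f : F`, that is,
`vᵢ = ⟪Pᵢ e, f⟫`. Testing the equation with `φ f`, for a scalar test function `φ`, gives
`0 = ∑ᵢ ∫ ⟪Pᵢ e, f⟫ ∂ᵢφ dσ = ∫ ∂ᵥφ dσ`, which is the claimed invariance. Exchanging sum and
integral is legitimate because `σ` is finite on the compact support of `φ`.
-/

open MeasureTheory Metric Filter
open scoped ENNReal RealInnerProductSpace Topology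

/-- The set `{ξ ∈ ℝ^d : P(ξ)e = 0}`, where `P(ξ) = ∑ᵢ ξᵢ Pᵢ` is the principal symbol of the
first-order operator with coefficients `P i`; it is a linear subspace of `ℝ^d`. -/
noncomputable def kerSymb {d : ℕ} {E F : Type*} [NormedAddCommGroup E] [InnerProductSpace ℝ E]
    [NormedAddCommGroup F] [InnerProductSpace ℝ F] (P : Fin d → E →ₗ[ℝ] F) (e : E) :
    Submodule ℝ (EuclideanSpace ℝ (Fin d)) where
  carrier := {ξ | ∑ i, ξ i • P i e = 0}
  zero_mem' := by simp
  add_mem' {x y} hx hy := by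
    simp only [Set.mem_setOf_eq] at hx hy ⊢
    have : ∑ i, (x + y) i • P i e = (∑ i, x i • P i e) + ∑ i, y i • P i e := by
      rw [← Finset.sum_add_distrib]
      exact Finset.sum_congr rfl fun i _ => by simp [PiLp.add_apply, add_smul]
    rw [this, hx, hy, add_zero]
  smul_mem' c x hx := by
    simp only [Set.mem_setOf_eq] at hx ⊢
    have : ∑ i, (c • x) i • P i e = c • ∑ i, x i • P i e := by
      rw [Finset.smul_sum]
      exact Finset.sum_congr rfl fun i _ => by simp [PiLp.smul_apply, smul_smul]
    rw [this, hx, smul_zero]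

/-- `ℓ_P`, the minimal dimension of `{ξ : P(ξ)e = 0}ᗮ` over nonzero `e ∈ E`. -/
noncomputable def ellP {d : ℕ} {E F : Type*} [NormedAddCommGroup E] [InnerProductSpace ℝ E]
    [NormedAddCommGroup F] [InnerProductSpace ℝ F] (P : Fin d → E →ₗ[ℝ] F) : ℕ :=
  sInf {n : ℕ | ∃ e : E, e ≠ 0 ∧ Module.finrank ℝ ((kerSymb P e)ᗮ) = n}

/-- `P(D)μ = 0` in the sense of distributions on `Ω`, for the `E`-valued measure `μ = g ν`
(`ν = |μ|`, `g` the polar): for every smooth compactly supported test function `φ : Ω → F`,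
`∑ᵢ ∫ ⟪Pᵢ(g x), ∂ᵢφ x⟫ dν = ∫ ⟪P₀(g x), φ x⟫ dν`. -/
def SolvesPDE {d : ℕ} {E F : Type*} [NormedAddCommGroup E] [InnerProductSpace ℝ E]
    [NormedAddCommGroup F] [InnerProductSpace ℝ F]
    (Ω : Set (EuclideanSpace ℝ (Fin d))) (P₀ : E →ₗ[ℝ] F) (P : Fin d → E →ₗ[ℝ] F)
    (ν : Measure (EuclideanSpace ℝ (Fin d))) (g : EuclideanSpace ℝ (Fin d) → E) : Prop :=
  ∀ φ : EuclideanSpace ℝ (Fin d) → F, ContDiff ℝ (⊤ : ℕ∞) φ → HasCompactSupport φ → tsupport φ ⊆ Ω →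
    (∑ i : Fin d, ∫ x, ⟪P i (g x), fderiv ℝ φ x (EuclideanSpace.single i 1)⟫ ∂ν)
      = ∫ x, ⟪P₀ (g x), φ x⟫ ∂ν

/-- A positive measure `σ` is `V`-invariant on the open set `U` if its distributional directional
derivative along every `v ∈ V` vanishes on `U`. -/
def VInvariantOn {d : ℕ} (σ : Measure (EuclideanSpace ℝ (Fin d)))
    (V : Submodule ℝ (EuclideanSpace ℝ (Fin d))) (U : Set (EuclideanSpace ℝ (Fin d))) : Prop :=
  ∀ v ∈ V, ∀ φ : EuclideanSpace ℝ (Fin d) → ℝ,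
    ContDiff ℝ (⊤ : ℕ∞) φ → HasCompactSupport φ → tsupport φ ⊆ U →
    ∫ y, fderiv ℝ φ y v ∂σ = 0

/-- The linear map `ξ ↦ P(ξ)e = ∑ᵢ ξᵢ Pᵢ e`. -/
noncomputable def symbAt {d : ℕ} {E F : Type*} [NormedAddCommGroup E] [InnerProductSpace ℝ E]
    [NormedAddCommGroup F] [InnerProductSpace ℝ F] (P : Fin d → E →ₗ[ℝ] F) (e : E) :
    EuclideanSpace ℝ (Fin d) →ₗ[ℝ] F :=
  ∑ i, (EuclideanSpace.proj (𝕜 := ℝ) i).toLinearMap.smulRight (P i e)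

lemma symbAt_apply {d : ℕ} {E F : Type*} [NormedAddCommGroup E] [InnerProductSpace ℝ E]
    [NormedAddCommGroup F] [InnerProductSpace ℝ F] (P : Fin d → E →ₗ[ℝ] F) (e : E)
    (ξ : EuclideanSpace ℝ (Fin d)) : symbAt P e ξ = ∑ i, ξ i • P i e := by
  simp [symbAt]

/-- Every vector orthogonal to `ker P(·)e` is the image of some `f` under the adjoint of
`ξ ↦ P(ξ)e`; in coordinates, `vᵢ = ⟪Pᵢ e, f⟫`. -/
lemma exists_coord_eq_inner {d : ℕ} {E F : Type*} [NormedAddCommGroup E] [InnerProductSpace ℝ E]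
    [NormedAddCommGroup F] [InnerProductSpace ℝ F] [FiniteDimensional ℝ F]
    (P : Fin d → E →ₗ[ℝ] F) (e : E) {v : EuclideanSpace ℝ (Fin d)} (hv : v ∈ (kerSymb P e)ᗮ) :
    ∃ f : F, ∀ i, v i = ⟪P i e, f⟫ := by
  have hker : kerSymb P e = LinearMap.ker (symbAt P e) := by
    ext ξ
    rw [LinearMap.mem_ker, symbAt_apply]
    rfl
  rw [hker, LinearMap.orthogonal_ker] at hv
  obtain ⟨f, rfl⟩ := hv
  refine ⟨f, fun i => ?_⟩
  have h := LinearMap.adjoint_inner_right (symbAt P e) (EuclideanSpace.single i (1 : ℝ)) f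
  have h2 : symbAt P e (EuclideanSpace.single i (1 : ℝ)) = P i e := by
    rw [symbAt_apply]
    simp [PiLp.single_apply]
  rw [h2] at h
  rw [← h]
  simp [EuclideanSpace.inner_single_left]

lemma integrable_fderiv_apply {d : ℕ} (σ : Measure (EuclideanSpace ℝ (Fin d)))
    {U : Set (EuclideanSpace ℝ (Fin d))}
    (hloc : ∀ K : Set (EuclideanSpace ℝ (Fin d)), K ⊆ U → IsCompact K → σ K < ⊤)
    {φ : EuclideanSpace ℝ (Fin d) → ℝ} (hφ : ContDiff ℝ (⊤ : ℕ∞) φ) (hc : HasCompactSupport φ)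
    (hs : tsupport φ ⊆ U) (w : EuclideanSpace ℝ (Fin d)) :
    Integrable (fun z => fderiv ℝ φ z w) σ := by
  have hcont : Continuous fun z => fderiv ℝ φ z w :=
    (hφ.continuous_fderiv (by simp)).clm_apply continuous_const
  obtain ⟨C, hC⟩ := (hc.fderiv_apply ℝ w).exists_bound_of_continuous hcont
  have hsub : Function.support (fun z => fderiv ℝ φ z w) ⊆ tsupport φ :=
    (subset_tsupport _).trans (tsupport_fderiv_apply_subset ℝ w)
  rw [← integrableOn_iff_integrable_of_support_subset hsub]
  exact Measure.integrableOn_of_bounded (hloc _ hs hc).ne hcont.aestronglyMeasurable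
    (M := C) (Eventually.of_forall hC)


/-- **Invariance from the principal symbol.** Let `e ≠ 0` in `E` and let `σ` be a positive Radon
measure on `B₁ ⊆ ℝ^d` such that the `E`-valued measure `e σ` solves the homogeneous equation
`∑ᵢ Pᵢ ∂ᵢ (e σ) = 0` distributionally on `B₁`.  Then `σ` is `V`-invariant on `B₁` for
`V = {ξ : P(ξ)e = 0}ᗮ`. -/
theorem invariance_from_symbol
    {d : ℕ} {E F : Type*} [NormedAddCommGroup E] [InnerProductSpace ℝ E] [FiniteDimensional ℝ E]
    [NormedAddCommGroup F] [InnerProductSpace ℝ F] [FiniteDimensional ℝ F]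
    (P : Fin d → E →ₗ[ℝ] F) (e : E) (he : e ≠ 0)
    (σ : Measure (EuclideanSpace ℝ (Fin d)))
    (hloc : ∀ K : Set (EuclideanSpace ℝ (Fin d)),
      K ⊆ ball (0 : EuclideanSpace ℝ (Fin d)) 1 → IsCompact K → σ K < ⊤)
    (hsupp : σ (ball (0 : EuclideanSpace ℝ (Fin d)) 1)ᶜ = 0)
    (hPDE : ∀ φ : EuclideanSpace ℝ (Fin d) → F, ContDiff ℝ (⊤ : ℕ∞) φ → HasCompactSupport φ →
      tsupport φ ⊆ ball (0 : EuclideanSpace ℝ (Fin d)) 1 →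
      (∑ i : Fin d, ∫ z, ⟪P i e, fderiv ℝ φ z (EuclideanSpace.single i 1)⟫ ∂σ) = 0) :
    VInvariantOn σ ((kerSymb P e)ᗮ) (ball (0 : EuclideanSpace ℝ (Fin d)) 1) := by
  intro v hv φ hφ hc hs
  obtain ⟨f, hf⟩ := exists_coord_eq_inner P e hv
  have hsub : tsupport (fun z => φ z • f) ⊆ tsupport φ := tsupport_smul_subset_left φ fun _ => f
  have key := hPDE (fun z => φ z • f) (hφ.smul contDiff_const) hc.smul_right (hsub.trans hs)
  have hterm : ∀ (i : Fin d) (z : EuclideanSpace ℝ (Fin d)),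
      ⟪P i e, fderiv ℝ (fun z => φ z • f) z (EuclideanSpace.single i 1)⟫
        = v i * fderiv ℝ φ z (EuclideanSpace.single i 1) := by
    intro i z
    rw [fderiv_smul_const (hφ.differentiable (by simp) z), ContinuousLinearMap.smulRight_apply,
      inner_smul_right, hf i, mul_comm]
  have hv_sum : v = ∑ i, v i • EuclideanSpace.single i (1 : ℝ) := by
    simpa using ((EuclideanSpace.basisFun (Fin d) ℝ).sum_repr v).symm
  simp_rw [hterm] at key
  rw [← integral_finsetSum _ fun i _ =>
    (integrable_fderiv_apply σ hloc hφ hc hs _).const_mul (v i)] at key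
  rw [← key]
  congr 1 with z
  conv_lhs => rw [hv_sum]
  simp
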